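/- Let (p_i)_{i∈ℕ} be points of a bounded subset of ℝ² and let (Ω_i), (b^i_1), (b^i_2), (b^i_3) be real numbers with ∑_i (|Ω_i| + |b^i_1| + |b^i_2| + |b^i_3|) < ∞. Writing δx_i = x − p^i_1, δy_i = y − p^i_2, r_i² = δx_i² + δy_i², define on ℝ² the strain components E_xz := −∑_i b^i_3 δy_i/(2π r_i²), E_yz := ∑_i b^i_3 δx_i/(2π r_i²), and E_xx := ∑_i [ (−b^i_2 δx_i − b^i_1 δy_i)/(2π r_i²) + (Ω_i/4π)(log r_i + δy_i²/r_i²) ], E_xy := ∑_i [ (−b^i_2 δy_i + b^i_1 δx_i)/(2π r_i²) − (Ω_i/4π) δx_i δy_i/r_i² ], E_yy := ∑_i [ (b^i_2 δx_i + b^i_1 δy_i)/(2π r_i²) + (Ω_i/4π)(log r_i + δx_i²/r_i²) ]. Then every series converges absolutely for Lebesgue-almost every point, each component is integrable on every bounded measurable subset of ℝ², and distributionally: (a) ∂_y²E_xx + ∂_x²E_yy − 2∂_x∂_yE_xy = ∑_i ( Ω_i δ_{p_i} + b^i_2 ∂_x δ_{p_i} − b^i_1 ∂_y δ_{p_i}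 ); and (b) ∂_x E_yz − ∂_y E_xz = ∑_i b^i_3 δ_{p_i}. -/

import Mathlib

open MeasureTheory Real

/-- Partial derivative in the `α`-th coordinate direction of a function on `ℝ²`. -/
noncomputable def pd (α : Fin 2) (f : EuclideanSpace ℝ (Fin 2) → ℝ) :
    EuclideanSpace ℝ (Fin 2) → ℝ :=
  fun x => fderiv ℝ f x (EuclideanSpace.single α 1)

/-- `E_xz` term of a screw dislocation at `q` with Burgers weight `b₃`:
`−b₃ δy / (2π r²)`. -/
noncomputable def tExz (b3 : ℝ) (q x : EuclideanSpace ℝ (Fin 2)) : ℝ :=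
  -b3 * (x 1 - q 1) / (2 * π * ((x 0 - q 0) ^ 2 + (x 1 - q 1) ^ 2))

/-- `E_yz` term of a screw dislocation at `q`: `b₃ δx / (2π r²)`. -/
noncomputable def tEyz (b3 : ℝ) (q x : EuclideanSpace ℝ (Fin 2)) : ℝ :=
  b3 * (x 0 - q 0) / (2 * π * ((x 0 - q 0) ^ 2 + (x 1 - q 1) ^ 2))

/-- `E_xx` term of an edge dislocation `(b₁, b₂)` plus wedge disclination `Ω` at `q`:
`(−b₂ δx − b₁ δy)/(2π r²) + (Ω/4π)(log r + δy²/r²)`. -/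
noncomputable def tExx (Ωi b1 b2 : ℝ) (q x : EuclideanSpace ℝ (Fin 2)) : ℝ :=
  (-b2 * (x 0 - q 0) - b1 * (x 1 - q 1))
      / (2 * π * ((x 0 - q 0) ^ 2 + (x 1 - q 1) ^ 2))
    + Ωi / (4 * π) * (Real.log (Real.sqrt ((x 0 - q 0) ^ 2 + (x 1 - q 1) ^ 2))
        + (x 1 - q 1) ^ 2 / ((x 0 - q 0) ^ 2 + (x 1 - q 1) ^ 2))

/-- `E_xy` term: `(−b₂ δy + b₁ δx)/(2π r²) − (Ω/4π) δx δy / r²`. -/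
noncomputable def tExy (Ωi b1 b2 : ℝ) (q x : EuclideanSpace ℝ (Fin 2)) : ℝ :=
  (-b2 * (x 1 - q 1) + b1 * (x 0 - q 0))
      / (2 * π * ((x 0 - q 0) ^ 2 + (x 1 - q 1) ^ 2))
    - Ωi / (4 * π) * ((x 0 - q 0) * (x 1 - q 1)
        / ((x 0 - q 0) ^ 2 + (x 1 - q 1) ^ 2))

/-- `E_yy` term: `(b₂ δx + b₁ δy)/(2π r²) + (Ω/4π)(log r + δx²/r²)`. -/
noncomputable def tEyy (Ωi b1 b2 : ℝ) (q x : EuclideanSpace ℝ (Fin 2)) : ℝ :=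
  (b2 * (x 0 - q 0) + b1 * (x 1 - q 1))
      / (2 * π * ((x 0 - q 0) ^ 2 + (x 1 - q 1) ^ 2))
    + Ωi / (4 * π) * (Real.log (Real.sqrt ((x 0 - q 0) ^ 2 + (x 1 - q 1) ^ 2))
        + (x 0 - q 0) ^ 2 / ((x 0 - q 0) ^ 2 + (x 1 - q 1) ^ 2))

/-!
The strains are superpositions of translates of the kernels `x_α / r²`, `x_α x_β / r²` and `log r`.
These are locally integrable, and the `L¹`-norm over a compact set of a translate by a point of a
bounded set is uniformly bounded, so the series converge absolutely in `L¹_loc` and may be paired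
with test functions term by term.

For a single defect at the origin the incompatibility is an iterated curl, and the curl of
`(x, y) / r² = ∇ log r` vanishes. What remains is the divergence of `∇ log r` and, for the wedge
disclination, the double divergence of `x ⊗ x / r²`. Their pairings with `φ` are the integrals of
`-Dφ(x) x / r²` and `D²φ(x)(x, x) / r²`, which reduce to `2π φ(0)` by integrating along rays in
polar coordinates. The integrations by parts against `log r` are performed on `log √(r² + ε)`.
-/

open Filter Topology Set Metric
open scoped Pointwise

section Series

variable {X ι F : Type*} [MeasurableSpace X] [NormedAddCommGroup F]
  {μ : Measure X} {t : ι → X → F}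

lemma tsum_lintegral_enorm_ne_top (ht : ∀ i, Integrable (t i) μ)
    (hs : Summable fun i => ∫ x, ‖t i x‖ ∂μ) : ∑' i, ∫⁻ x, ‖t i x‖ₑ ∂μ ≠ ⊤ := by
  simp only [← ofReal_integral_norm_eq_lintegral_enorm (ht _)]
  exact hs.tsum_ofReal_ne_top

variable [Countable ι]

lemma ae_summable_norm_of_summable_integral_norm (ht : ∀ i, Integrable (t i) μ)
    (hs : Summable fun i => ∫ x, ‖t i x‖ ∂μ) : ∀ᵐ x ∂μ, Summable fun i => ‖t i x‖ := by
  refine summable_norm_of_tsum_eLpNorm_ne_top (p := 1) le_rfl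
    (fun i => (ht i).aestronglyMeasurable) ?_
  simpa only [eLpNorm_one_eq_lintegral_enorm] using tsum_lintegral_enorm_ne_top ht hs

lemma integrable_tsum_of_summable_integral_norm [CompleteSpace F] (ht : ∀ i, Integrable (t i) μ)
    (hs : Summable fun i => ∫ x, ‖t i x‖ ∂μ) : Integrable (fun x => ∑' i, t i x) μ := by
  have h_lim : ∀ᵐ x ∂μ,
      Tendsto (fun s : Finset ι => ∑ i ∈ s, t i x) atTop (𝓝 (∑' i, t i x)) := by
    filter_upwards [ae_summable_norm_of_summable_integral_norm ht hs] with x hx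
    exact hx.of_norm.hasSum
  refine ⟨aestronglyMeasurable_of_tendsto_ae atTop
    (fun s => Finset.aestronglyMeasurable_fun_sum s fun i _ => (ht i).aestronglyMeasurable) h_lim,
    ?_⟩
  calc ∫⁻ x, ‖∑' i, t i x‖ₑ ∂μ
      ≤ ∫⁻ x, ∑' i, ‖t i x‖ₑ ∂μ := lintegral_mono fun x => enorm_tsum_le_tsum_enorm
    _ = ∑' i, ∫⁻ x, ‖t i x‖ₑ ∂μ :=
        lintegral_tsum fun i => (ht i).aestronglyMeasurable.enorm
    _ < ⊤ := (tsum_lintegral_enorm_ne_top ht hs).lt_top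

end Series

/-- A series of functions converging absolutely in `L¹` on every compact set: the terms are locally
integrable and their `L¹`-norms over each compact set are summable. -/
structure LocallyL1Summable {X ι F : Type*} [TopologicalSpace X] [MeasurableSpace X]
    [NormedAddCommGroup F] (t : ι → X → F) (μ : Measure X) : Prop where
  locallyIntegrable (i : ι) : LocallyIntegrable (t i) μ
  summable_integral_norm {K : Set X} (hK : IsCompact K) :
    Summable fun i => ∫ x in K, ‖t i x‖ ∂μ

namespace LocallyL1Summable

variable {X ι F : Type*} [TopologicalSpace X] [MeasurableSpace X] [NormedAddCommGroup F]
  {μ : Measure X} {t u : ι → X → F}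

lemma integrableOn (h : LocallyL1Summable t μ) {K : Set X} (hK : IsCompact K) (i : ι) :
    IntegrableOn (t i) K μ :=
  (h.locallyIntegrable i).integrableOn_isCompact hK

lemma add (ht : LocallyL1Summable t μ) (hu : LocallyL1Summable u μ) :
    LocallyL1Summable (fun i x => t i x + u i x) μ where
  locallyIntegrable i := (ht.locallyIntegrable i).add (hu.locallyIntegrable i)
  summable_integral_norm hK := by
    refine Summable.of_nonneg_of_le (fun i => integral_nonneg fun x => norm_nonneg _)
      (fun i => ?_) ((ht.summable_integral_norm hK).add (hu.summable_integral_norm hK))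
    have hti := (ht.integrableOn hK i).norm
    have hui := (hu.integrableOn hK i).norm
    rw [← integral_add hti hui]
    exact integral_mono_of_nonneg (.of_forall fun x => norm_nonneg _) (hti.add hui)
      (.of_forall fun x => norm_add_le _ _)

variable [Countable ι]

lemma ae_summable_norm [SigmaCompactSpace X] (h : LocallyL1Summable t μ) :
    ∀ᵐ x ∂μ, Summable fun i => ‖t i x‖ := by
  rw [← Measure.restrict_univ (μ := μ), ← iUnion_compactCovering X, ae_restrict_iUnion_iff]
  exact fun n => ae_summable_norm_of_summable_integral_norm
    (h.integrableOn (isCompact_compactCovering X n))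
    (h.summable_integral_norm (isCompact_compactCovering X n))

lemma integrableOn_tsum [CompleteSpace F] (h : LocallyL1Summable t μ) {K : Set X}
    (hK : IsCompact K) : IntegrableOn (fun x => ∑' i, t i x) K μ :=
  integrable_tsum_of_summable_integral_norm (h.integrableOn hK) (h.summable_integral_norm hK)

lemma locallyIntegrable_tsum [CompleteSpace F] [LocallyCompactSpace X]
    (h : LocallyL1Summable t μ) : LocallyIntegrable (fun x => ∑' i, t i x) μ :=
  locallyIntegrable_iff.2 fun _ hK => h.integrableOn_tsum hK

lemma integrableOn_tsum_of_isBounded {X : Type*} [PseudoMetricSpace X] [ProperSpace X]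
    [MeasurableSpace X] {μ : Measure X} {t : ι → X → F} [CompleteSpace F]
    (h : LocallyL1Summable t μ) {A : Set X} (hA : Bornology.IsBounded A) :
    IntegrableOn (fun x => ∑' i, t i x) A μ :=
  (h.integrableOn_tsum hA.isCompact_closure).mono_set subset_closure

end LocallyL1Summable

lemma setIntegral_tsupport_mul {X : Type*} [TopologicalSpace X] [MeasurableSpace X]
    {μ : Measure X} (f g : X → ℝ) : ∫ x in tsupport g, f x * g x ∂μ = ∫ x, f x * g x ∂μ :=
  setIntegral_eq_integral_of_forall_compl_eq_zero fun x hx => by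
    rw [image_eq_zero_of_notMem_tsupport hx, mul_zero]

lemma LocallyL1Summable.hasSum_integral_mul {X ι : Type*} [TopologicalSpace X] [T2Space X]
    [MeasurableSpace X] [OpensMeasurableSpace X] [Countable ι] {μ : Measure X} {t : ι → X → ℝ}
    (h : LocallyL1Summable t μ) {g : X → ℝ} (hg : Continuous g) (hgc : HasCompactSupport g) :
    HasSum (fun i => ∫ x, t i x * g x ∂μ) (∫ x, (∑' i, t i x) * g x ∂μ) := by
  obtain ⟨C, hC⟩ := hgc.exists_bound_of_continuous hg
  have h_int (i : ι) : IntegrableOn (fun x => t i x * g x) (tsupport g) μ :=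
    (h.integrableOn hgc i).mul_continuousOn hg.continuousOn hgc
  have h_sum : Summable fun i => ∫ x in tsupport g, ‖t i x * g x‖ ∂μ := by
    refine Summable.of_nonneg_of_le (fun i => integral_nonneg fun x => norm_nonneg _)
      (fun i => ?_) ((h.summable_integral_norm hgc).mul_right C)
    rw [← integral_mul_const]
    refine integral_mono (h_int i).norm ((h.integrableOn hgc i).norm.mul_const C) fun x => ?_
    simp only [norm_mul]
    gcongr
    exact hC x
  simpa only [tsum_mul_right, setIntegral_tsupport_mul]
    using hasSum_integral_of_summable_integral_norm h_int h_sum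

section Translates

variable {G F : Type*} [AddCommGroup G] [TopologicalSpace G] [IsTopologicalAddGroup G]
  [MeasurableSpace G] [BorelSpace G] [NormedAddCommGroup F] {μ : Measure G}
  [μ.IsAddRightInvariant] {k : G → F}

lemma integrableOn_comp_sub_right_iff (q : G) (A : Set G) :
    IntegrableOn (fun x => k (x - q)) A μ ↔ IntegrableOn k ((· - q) '' A) μ :=
  ((measurePreserving_sub_right μ q).integrableOn_image
    (Homeomorph.subRight q).measurableEmbedding).symm

lemma locallyIntegrable_comp_sub_right [LocallyCompactSpace G] (hk : LocallyIntegrable k μ)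
    (q : G) : LocallyIntegrable (fun x => k (x - q)) μ :=
  locallyIntegrable_iff.2 fun A hA => (integrableOn_comp_sub_right_iff q A).2 <|
    hk.integrableOn_isCompact (hA.image (continuous_id.sub continuous_const))

lemma setIntegral_norm_comp_sub_right_le (hk : LocallyIntegrable k μ) {A P : Set G}
    (hA : IsCompact A) (hP : IsCompact P) {q : G} (hq : q ∈ P) :
    ∫ x in A, ‖k (x - q)‖ ∂μ ≤ ∫ x in A - P, ‖k x‖ ∂μ := by
  have h_sub : (· - q) '' A ⊆ A - P := by
    rintro _ ⟨a, ha, rfl⟩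
    exact sub_mem_sub ha hq
  have h_cpt : IsCompact (A - P) := by
    rw [sub_eq_add_neg]
    exact hA.add hP.neg
  rw [← (measurePreserving_sub_right μ q).setIntegral_image_emb
    (Homeomorph.subRight q).measurableEmbedding (fun x => ‖k x‖) A]
  exact setIntegral_mono_set (hk.integrableOn_isCompact h_cpt).norm
    (.of_forall fun x => norm_nonneg _) h_sub.eventuallyLE

lemma locallyL1Summable_smul_comp_sub_right [LocallyCompactSpace G] [NormedSpace ℝ F] {ι : Type*}
    (hk : LocallyIntegrable k μ) {P : Set G} (hP : IsCompact P) {p : ι → G} (hp : ∀ i, p i ∈ P)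
    {c : ι → ℝ} (hc : Summable c) : LocallyL1Summable (fun i x => c i • k (x - p i)) μ where
  locallyIntegrable i := (locallyIntegrable_comp_sub_right hk (p i)).smul (c i)
  summable_integral_norm {A} hA := by
    refine Summable.of_nonneg_of_le (fun i => integral_nonneg fun x => norm_nonneg _)
      (fun i => ?_) (hc.abs.mul_right (∫ x in A - P, ‖k x‖ ∂μ))
    simp only [norm_smul, integral_const_mul, Real.norm_eq_abs]
    gcongr
    exact setIntegral_norm_comp_sub_right_le hk hA hP (hp i)

end Translates
section Radial

variable {E F : Type*} [NormedAddCommGroup E] [NormedSpace ℝ E] [FiniteDimensional ℝ E]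
  [MeasurableSpace E] [BorelSpace E] [NormedAddCommGroup F] [NormedSpace ℝ F]
  (μ : Measure E) [μ.IsAddHaarMeasure]

lemma locallyIntegrable_inv_norm_pow {k : ℕ} (hk : k < Module.finrank ℝ E) :
    LocallyIntegrable (fun x : E => (‖x‖ ^ k)⁻¹) μ := by
  have : Nontrivial E := Module.nontrivial_of_finrank_pos (R := ℝ) (by lia)
  refine locallyIntegrable_iff.2 fun K hK => ?_
  obtain ⟨r, hr⟩ := hK.isBounded.subset_ball 0
  refine IntegrableOn.mono_set ?_ hr
  rw [integrableOn_fun_norm_addHaar μ (f := fun y : ℝ => (y ^ k)⁻¹)]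
  have h_cont : IntegrableOn (fun y : ℝ => y ^ (Module.finrank ℝ E - 1 - k)) (Ioo 0 r) :=
    ((continuous_pow _).integrableOn_Icc (a := 0) (b := r)).mono_set Ioo_subset_Icc_self
  refine h_cont.congr_fun (fun y hy => ?_) measurableSet_Ioo
  simp only [smul_eq_mul]
  rw [pow_sub₀ y hy.1.ne' (by lia)]

lemma integral_volumeIoiPow (n : ℕ) (g : ℝ → F) :
    ∫ r : Ioi (0 : ℝ), g r ∂.volumeIoiPow n = ∫ r in Ioi (0 : ℝ), r ^ n • g r := by
  simp only [Measure.volumeIoiPow, ENNReal.ofReal]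
  rw [integral_withDensity_eq_integral_smul
      ((measurable_subtype_coe.pow_const _).real_toNNReal),
    integral_subtype_comap measurableSet_Ioi fun r => Real.toNNReal (r ^ n) • g r]
  refine setIntegral_congr_fun measurableSet_Ioi fun r hr => ?_
  simp only [NNReal.smul_def, Real.coe_toNNReal _ (pow_nonneg (le_of_lt hr) n)]

lemma integral_eq_integral_toSphere [Nontrivial E] {f : E → F} (hf : Integrable f μ) :
    ∫ x, f x ∂μ = ∫ ω : sphere (0 : E) 1,
      (∫ r in Ioi (0 : ℝ), r ^ (Module.finrank ℝ E - 1) • f (r • (ω : E))) ∂μ.toSphere := by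
  let g : sphere (0 : E) 1 × Ioi (0 : ℝ) → F := fun y => f ((y.2 : ℝ) • (y.1 : E))
  have h_comp (x : ({0}ᶜ : Set E)) : g (homeomorphUnitSphereProd E x) = f x := by
    simp [g, smul_smul, norm_ne_zero_iff.2 x.2]
  have h_mp := μ.measurePreserving_homeomorphUnitSphereProd
  have h_emb := (homeomorphUnitSphereProd E).measurableEmbedding
  have h_int : Integrable g (μ.toSphere.prod (.volumeIoiPow (Module.finrank ℝ E - 1))) := by
    rw [← h_mp.integrable_comp_emb h_emb]
    simp only [Function.comp_def, h_comp]
    exact (integrableOn_iff_comap_subtypeVal (measurableSet_singleton 0).compl).1 hf.integrableOn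
  calc ∫ x, f x ∂μ
      = ∫ x : ({0}ᶜ : Set E), f x ∂(μ.comap (↑)) := by
        rw [integral_subtype_comap (measurableSet_singleton _).compl f, restrict_compl_singleton]
    _ = ∫ y, g y ∂μ.toSphere.prod (.volumeIoiPow (Module.finrank ℝ E - 1)) := by
        rw [← h_mp.integral_comp h_emb]
        simp only [h_comp]
    _ = _ := by
        rw [integral_prod _ h_int]
        refine integral_congr_ae (.of_forall fun ω => ?_)
        exact integral_volumeIoiPow _ fun r => f (r • (ω : E))

end Radial

section Ray

variable {E : Type*} [NormedAddCommGroup E] [NormedSpace ℝ E] {ψ : E → ℝ}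

lemma integral_Ioi_fderiv_smul_self (hψ : ContDiff ℝ 1 ψ) (hψc : HasCompactSupport ψ) {v : E}
    (hv : v ≠ 0) : ∫ r in Ioi (0 : ℝ), fderiv ℝ ψ (r • v) v = -ψ 0 := by
  have h_ray : ContDiff ℝ 1 fun r : ℝ => ψ (r • v) := by fun_prop
  have h_supp : HasCompactSupport fun r : ℝ => ψ (r • v) :=
    hψc.comp_isClosedEmbedding (isClosedEmbedding_smul_left hv)
  have h_deriv (r : ℝ) : deriv (fun r : ℝ => ψ (r • v)) r = fderiv ℝ ψ (r • v) v :=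
    (((hψ.differentiable one_ne_zero (r • v)).hasFDerivAt.comp_hasDerivAt r
      ((hasDerivAt_id r).smul_const v)).congr_deriv (by simp)).deriv
  simpa [h_deriv] using h_supp.integral_Ioi_deriv_eq h_ray 0

end Ray

section SecondDerivative

variable {E : Type*} [NormedAddCommGroup E] [NormedSpace ℝ E] {φ : E → ℝ}

lemma contDiff_fderiv_apply_self {n : WithTop ℕ∞} (hφ : ContDiff ℝ (n + 1) φ) :
    ContDiff ℝ n fun x => fderiv ℝ φ x x :=
  (hφ.fderiv_right le_rfl).clm_apply contDiff_id

lemma hasCompactSupport_fderiv_apply_self (hφc : HasCompactSupport φ) :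
    HasCompactSupport fun x => fderiv ℝ φ x x :=
  (hφc.fderiv ℝ).mono fun x hx h => hx (by simp [h])

lemma fderiv_fderiv_apply_self (hφ : ContDiff ℝ 2 φ) (x : E) :
    fderiv ℝ (fun y => fderiv ℝ φ y y) x x = fderiv ℝ φ x x + fderiv ℝ (fderiv ℝ φ) x x x := by
  have h_diff : DifferentiableAt ℝ (fderiv ℝ φ) x :=
    (hφ.fderiv_right (m := 1) (by norm_num)).differentiable one_ne_zero x
  have h_deriv : fderiv ℝ (fun y => fderiv ℝ φ y y) x = _ :=
    (h_diff.hasFDerivAt.clm_apply (hasFDerivAt_id x)).fderiv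
  simp [h_deriv]

lemma hessian_apply_self_div_norm_pow (hφ : ContDiff ℝ 2 φ) (x : E) :
    fderiv ℝ (fderiv ℝ φ) x x x / ‖x‖ ^ Module.finrank ℝ E
      = fderiv ℝ (fun y => fderiv ℝ φ y y) x x / ‖x‖ ^ Module.finrank ℝ E
        - fderiv ℝ φ x x / ‖x‖ ^ Module.finrank ℝ E := by
  rw [fderiv_fderiv_apply_self hφ]
  ring

lemma fderiv_fderiv_apply_const (hφ : ContDiff ℝ 2 φ) (v w x : E) :
    fderiv ℝ (fun y => fderiv ℝ φ y v) x w = fderiv ℝ (fderiv ℝ φ) x w v := by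
  have h_diff : DifferentiableAt ℝ (fderiv ℝ φ) x :=
    (hφ.fderiv_right (m := 1) (by norm_num)).differentiable one_ne_zero x
  rw [fderiv_clm_apply h_diff (differentiableAt_const v)]
  simp

lemma fderiv_fderiv_apply_comm (hφ : ContDiff ℝ 2 φ) (v w x : E) :
    fderiv ℝ (fun y => fderiv ℝ φ y v) x w = fderiv ℝ (fun y => fderiv ℝ φ y w) x v := by
  rw [fderiv_fderiv_apply_const hφ, fderiv_fderiv_apply_const hφ]
  exact (hφ.contDiffAt.isSymmSndFDerivAt (by simp)).eq w v

end SecondDerivative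

section EulerIntegral

variable {E : Type*} [NormedAddCommGroup E] [NormedSpace ℝ E] [FiniteDimensional ℝ E] [Nontrivial E]
  [MeasurableSpace E] [BorelSpace E] (μ : Measure E) [μ.IsAddHaarMeasure] {ψ φ : E → ℝ}

lemma integrable_fderiv_apply_self_div_norm_pow (hψ : ContDiff ℝ 1 ψ)
    (hψc : HasCompactSupport ψ) :
    Integrable (fun x => fderiv ℝ ψ x x / ‖x‖ ^ Module.finrank ℝ E) μ := by
  have h_cont : Continuous (fderiv ℝ ψ) := hψ.continuous_fderiv one_ne_zero
  have h_meas : Measurable fun x => fderiv ℝ ψ x x / ‖x‖ ^ Module.finrank ℝ E :=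
    (h_cont.clm_apply continuous_id).measurable.div (measurable_norm.pow_const _)
  have h_pos : 0 < Module.finrank ℝ E := Module.finrank_pos
  have h_dom := (locallyIntegrable_inv_norm_pow μ (Nat.sub_one_lt_of_lt h_pos)
    ).integrable_smul_right_of_hasCompactSupport h_cont.norm (hψc.fderiv ℝ).norm
  refine h_dom.mono' h_meas.aestronglyMeasurable (.of_forall fun x => ?_)
  rcases eq_or_ne x 0 with rfl | hx
  · simp only [map_zero, zero_div, norm_zero, smul_eq_mul]
    positivity
  rw [norm_div, norm_pow, norm_norm, div_le_iff₀ (by positivity)]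
  calc ‖fderiv ℝ ψ x x‖ ≤ ‖fderiv ℝ ψ x‖ * ‖x‖ := (fderiv ℝ ψ x).le_opNorm x
    _ = (‖x‖ ^ (Module.finrank ℝ E - 1))⁻¹ • ‖fderiv ℝ ψ x‖ * ‖x‖ ^ Module.finrank ℝ E := by
      rw [← Nat.sub_add_cancel h_pos, pow_succ, Nat.add_sub_cancel, smul_eq_mul]
      field_simp

lemma integral_fderiv_apply_self_div_norm_pow (hψ : ContDiff ℝ 1 ψ) (hψc : HasCompactSupport ψ) :
    ∫ x, fderiv ℝ ψ x x / ‖x‖ ^ Module.finrank ℝ E ∂μ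
      = -(Module.finrank ℝ E * μ.real (ball 0 1) * ψ 0) := by
  have h_ray (ω : sphere (0 : E) 1) : ∫ r in Ioi (0 : ℝ), r ^ (Module.finrank ℝ E - 1) •
      (fderiv ℝ ψ (r • (ω : E)) (r • (ω : E)) / ‖r • (ω : E)‖ ^ Module.finrank ℝ E) = -ψ 0 := by
    rw [← integral_Ioi_fderiv_smul_self hψ hψc (ne_zero_of_mem_unit_sphere ω)]
    refine setIntegral_congr_fun measurableSet_Ioi fun r (hr : 0 < r) => ?_
    simp only [map_smul, norm_smul, norm_eq_of_mem_sphere, mul_one, norm_of_nonneg hr.le,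
      smul_eq_mul]
    rw [← pow_sub_one_mul Module.finrank_pos.ne' r]
    field_simp
  rw [integral_eq_integral_toSphere μ (integrable_fderiv_apply_self_div_norm_pow μ hψ hψc)]
  simp only [h_ray]
  rw [integral_const, μ.toSphere_real_apply_univ, smul_eq_mul]
  ring

lemma integrable_hessian_apply_self_div_norm_pow (hφ : ContDiff ℝ 2 φ)
    (hφc : HasCompactSupport φ) :
    Integrable (fun x => fderiv ℝ (fderiv ℝ φ) x x x / ‖x‖ ^ Module.finrank ℝ E) μ := by
  simp only [hessian_apply_self_div_norm_pow hφ]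
  exact (integrable_fderiv_apply_self_div_norm_pow μ (contDiff_fderiv_apply_self hφ)
    (hasCompactSupport_fderiv_apply_self hφc)).sub
    (integrable_fderiv_apply_self_div_norm_pow μ (hφ.of_le one_le_two) hφc)

/- The function `ψ x = Dφ(x) x` vanishes at `0` and has radial derivative `Dφ(x) x + D²φ(x)(x, x)`,
so the Hessian integral is the opposite of the gradient one. -/
lemma integral_hessian_apply_self_div_norm_pow (hφ : ContDiff ℝ 2 φ) (hφc : HasCompactSupport φ) :
    ∫ x, fderiv ℝ (fderiv ℝ φ) x x x / ‖x‖ ^ Module.finrank ℝ E ∂μ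
      = Module.finrank ℝ E * μ.real (ball 0 1) * φ 0 := by
  have hφ₁ : ContDiff ℝ 1 φ := hφ.of_le one_le_two
  have hψ : ContDiff ℝ 1 fun x => fderiv ℝ φ x x := contDiff_fderiv_apply_self hφ
  have hψc := hasCompactSupport_fderiv_apply_self hφc
  simp only [hessian_apply_self_div_norm_pow hφ]
  rw [integral_sub (integrable_fderiv_apply_self_div_norm_pow μ hψ hψc)
      (integrable_fderiv_apply_self_div_norm_pow μ hφ₁ hφc),
    integral_fderiv_apply_self_div_norm_pow μ hψ hψc,
    integral_fderiv_apply_self_div_norm_pow μ hφ₁ hφc, map_zero]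
  ring

end EulerIntegral

section IntegrationByParts

variable {E : Type*} [NormedAddCommGroup E] [NormedSpace ℝ E] [FiniteDimensional ℝ E]
  [MeasurableSpace E] [BorelSpace E] {μ : Measure E} [μ.IsAddHaarMeasure] {u ψ : E → ℝ}

lemma integral_mul_fderiv_of_hasCompactSupport (hu : ContDiff ℝ 1 u) (hψ : ContDiff ℝ 1 ψ)
    (hψc : HasCompactSupport ψ) (v : E) :
    ∫ x, u x * fderiv ℝ ψ x v ∂μ = -∫ x, fderiv ℝ u x v * ψ x ∂μ := by
  have hu' : Continuous fun x => fderiv ℝ u x v :=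
    (hu.continuous_fderiv one_ne_zero).clm_apply continuous_const
  have hψ' : Continuous fun x => fderiv ℝ ψ x v :=
    (hψ.continuous_fderiv one_ne_zero).clm_apply continuous_const
  refine integral_mul_fderiv_eq_neg_fderiv_mul_of_integrable ?_ ?_ ?_
    (fun x _ => hu.differentiable one_ne_zero x) (fun x _ => hψ.differentiable one_ne_zero x)
  · exact (hu'.mul hψ.continuous).integrable_of_hasCompactSupport hψc.mul_left
  · exact (hu.continuous.mul hψ').integrable_of_hasCompactSupport
      (hψc.fderiv_apply ℝ v).mul_left
  · exact (hu.continuous.mul hψ.continuous).integrable_of_hasCompactSupport hψc.mul_left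

lemma integral_fderiv_mul_fderiv_comm (hu : ContDiff ℝ 2 u) (hψ : ContDiff ℝ 1 ψ)
    (hψc : HasCompactSupport ψ) (v w : E) :
    ∫ x, fderiv ℝ u x v * fderiv ℝ ψ x w ∂μ = ∫ x, fderiv ℝ u x w * fderiv ℝ ψ x v ∂μ := by
  have hu' (v : E) : ContDiff ℝ 1 fun x => fderiv ℝ u x v :=
    (hu.fderiv_right (by norm_num)).clm_apply contDiff_const
  rw [integral_mul_fderiv_of_hasCompactSupport (hu' v) hψ hψc,
    integral_mul_fderiv_of_hasCompactSupport (hu' w) hψ hψc]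
  simp only [fderiv_fderiv_apply_comm hu v w]

end IntegrationByParts

lemma tendsto_integral_mul_of_dominated {X α : Type*} [TopologicalSpace X] [T2Space X]
    [MeasurableSpace X] [OpensMeasurableSpace X] {μ : Measure X} {l : Filter α}
    [l.IsCountablyGenerated] {f : α → X → ℝ} {f₀ H g : X → ℝ} (hH : LocallyIntegrable H μ)
    (hf : ∀ᶠ a in l, AEStronglyMeasurable (f a) μ)
    (h_le : ∀ᶠ a in l, ∀ᵐ x ∂μ, ‖f a x‖ ≤ H x)
    (h_lim : ∀ᵐ x ∂μ, Tendsto (fun a => f a x) l (𝓝 (f₀ x)))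
    (hg : Continuous g) (hgc : HasCompactSupport g) :
    Tendsto (fun a => ∫ x, f a x * g x ∂μ) l (𝓝 (∫ x, f₀ x * g x ∂μ)) := by
  refine tendsto_integral_filter_of_dominated_convergence (fun x => H x * ‖g x‖)
    (hf.mono fun a ha => ha.mul hg.aestronglyMeasurable) (h_le.mono fun a ha => ?_)
    (hH.integrable_smul_right_of_hasCompactSupport hg.norm hgc.norm)
    (h_lim.mono fun x hx => hx.mul_const (g x))
  filter_upwards [ha] with x hx
  rw [norm_mul]
  gcongr

section RegularizedLog

variable {E : Type*} [NormedAddCommGroup E] {ε : ℝ}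

/-- The regularisation `log √(‖x‖² + ε)` of the logarithmic potential `log ‖x‖`, which is smooth
for `0 < ε` and equal to `log ‖x‖` for `ε = 0`. -/
noncomputable def regLogNorm (ε : ℝ) (x : E) : ℝ := Real.log (‖x‖ ^ 2 + ε) / 2

lemma regLogNorm_zero (x : E) : regLogNorm 0 x = Real.log ‖x‖ := by
  rw [regLogNorm, add_zero, Real.log_pow]
  simp

lemma abs_regLogNorm_le (hε : ε ∈ Icc (0 : ℝ) 1) {x : E} (hx : x ≠ 0) :
    |regLogNorm ε x| ≤ ‖x‖⁻¹ + ‖x‖ := by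
  have h_pos : 0 < ‖x‖ := norm_pos_iff.2 hx
  have h_upper : Real.log (‖x‖ ^ 2 + ε) ≤ 2 * ‖x‖ := calc
    Real.log (‖x‖ ^ 2 + ε) ≤ Real.log ((1 + ‖x‖) ^ 2) :=
      Real.log_le_log (by linarith [hε.1, pow_pos h_pos 2]) (by linarith [hε.2])
    _ = 2 * Real.log (1 + ‖x‖) := by rw [Real.log_pow, Nat.cast_two]
    _ ≤ 2 * ‖x‖ := by linarith [Real.log_le_sub_one_of_pos (add_pos one_pos h_pos)]
  have h_lower : -(2 * ‖x‖⁻¹) ≤ Real.log (‖x‖ ^ 2 + ε) := calc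
    -(2 * ‖x‖⁻¹) ≤ 2 * Real.log ‖x‖ := by linarith [Real.neg_inv_le_log h_pos.le]
    _ = Real.log (‖x‖ ^ 2) := by rw [Real.log_pow, Nat.cast_two]
    _ ≤ Real.log (‖x‖ ^ 2 + ε) := Real.log_le_log (by positivity) (by linarith [hε.1])
  have h_inv : 0 < ‖x‖⁻¹ := inv_pos.2 h_pos
  rw [regLogNorm, abs_le]
  constructor <;> linarith

lemma tendsto_norm_sq_add (x : E) :
    Tendsto (fun ε : ℝ => ‖x‖ ^ 2 + ε) (𝓝[>] 0) (𝓝 (‖x‖ ^ 2)) := by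
  have h_cont : Continuous fun ε : ℝ => ‖x‖ ^ 2 + ε := by fun_prop
  simpa using (h_cont.tendsto 0).mono_left nhdsWithin_le_nhds

variable [InnerProductSpace ℝ E]

open scoped RealInnerProductSpace

lemma contDiff_regLogNorm {n : WithTop ℕ∞} (hε : 0 < ε) : ContDiff ℝ n (regLogNorm (E := E) ε) :=
  (((contDiff_norm_sq ℝ).add contDiff_const).log fun x => by positivity).div_const 2

lemma fderiv_regLogNorm (hε : 0 < ε) (x v : E) :
    fderiv ℝ (regLogNorm ε) x v = ⟪x, v⟫ / (‖x‖ ^ 2 + ε) := by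
  have h_sq : HasFDerivAt (fun x : E => ‖x‖ ^ 2 + ε) (2 • innerSL ℝ x) x :=
    (hasStrictFDerivAt_norm_sq x).hasFDerivAt.add_const ε
  have h_deriv : HasFDerivAt (regLogNorm ε) _ x :=
    (h_sq.log (by positivity)).mul_const (2⁻¹ : ℝ)
  rw [h_deriv.fderiv]
  simp only [smul_apply, coe_innerSL_apply, nsmul_eq_mul, Nat.cast_ofNat,
    smul_eq_mul]
  field_simp

lemma abs_inner_div_norm_sq_add_le (hε : 0 ≤ ε) (x v : E) :
    |⟪x, v⟫ / (‖x‖ ^ 2 + ε)| ≤ ‖v‖ * ‖x‖⁻¹ := by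
  rcases eq_or_ne x 0 with rfl | hx
  · simp
  calc |⟪x, v⟫ / (‖x‖ ^ 2 + ε)| = |⟪x, v⟫| / (‖x‖ ^ 2 + ε) := by
        rw [abs_div, abs_of_pos (by positivity : 0 < ‖x‖ ^ 2 + ε)]
    _ ≤ ‖x‖ * ‖v‖ / ‖x‖ ^ 2 := by
        gcongr
        · exact abs_real_inner_le_norm x v
        · linarith
    _ = ‖v‖ * ‖x‖⁻¹ := by field_simp

variable [FiniteDimensional ℝ E] [MeasurableSpace E] [BorelSpace E] {μ : Measure E}
  [μ.IsAddHaarMeasure] {ψ : E → ℝ}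

lemma locallyIntegrable_inv_norm (hE : 1 < Module.finrank ℝ E) :
    LocallyIntegrable (fun x : E => ‖x‖⁻¹) μ := by
  simpa only [pow_one] using locallyIntegrable_inv_norm_pow μ hE

lemma locallyIntegrable_log_norm (hE : 1 < Module.finrank ℝ E) :
    LocallyIntegrable (fun x : E => Real.log ‖x‖) μ := by
  have : Nontrivial E := Module.nontrivial_of_finrank_pos (R := ℝ) (by lia)
  refine ((locallyIntegrable_inv_norm hE).add continuous_norm.locallyIntegrable).mono
    (Real.measurable_log.comp measurable_norm).aestronglyMeasurable ?_
  filter_upwards [Measure.ae_ne μ 0] with x hx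
  rw [← regLogNorm_zero]
  exact (abs_regLogNorm_le (left_mem_Icc.2 zero_le_one) hx).trans (le_abs_self _)

lemma locallyIntegrable_inner_div_norm_sq (hE : 1 < Module.finrank ℝ E) (v : E) :
    LocallyIntegrable (fun x => ⟪x, v⟫ / ‖x‖ ^ 2) μ := by
  have h_meas : Measurable fun x => ⟪x, v⟫ / ‖x‖ ^ 2 := by fun_prop
  refine ((locallyIntegrable_inv_norm hE).smul ‖v‖).mono h_meas.aestronglyMeasurable
    (.of_forall fun x => ?_)
  have h_le := abs_inner_div_norm_sq_add_le le_rfl x v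
  rw [add_zero] at h_le
  exact h_le.trans (le_abs_self _)

lemma tendsto_integral_regLogNorm_mul (hE : 1 < Module.finrank ℝ E) (hψ : Continuous ψ)
    (hψc : HasCompactSupport ψ) :
    Tendsto (fun ε => ∫ x, regLogNorm ε x * ψ x ∂μ) (𝓝[>] 0)
      (𝓝 (∫ x, Real.log ‖x‖ * ψ x ∂μ)) := by
  have : Nontrivial E := Module.nontrivial_of_finrank_pos (R := ℝ) (by lia)
  refine tendsto_integral_mul_of_dominated
    ((locallyIntegrable_inv_norm hE).add continuous_norm.locallyIntegrable) ?_ ?_ ?_ hψ hψc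
  · filter_upwards [self_mem_nhdsWithin] with ε hε
    exact (contDiff_regLogNorm (n := 0) hε).continuous.aestronglyMeasurable
  · filter_upwards [Ioc_mem_nhdsGT one_pos] with ε hε
    filter_upwards [Measure.ae_ne μ 0] with x hx
    exact abs_regLogNorm_le (Ioc_subset_Icc_self hε) hx
  · filter_upwards [Measure.ae_ne μ 0] with x hx
    rw [← regLogNorm_zero, regLogNorm, add_zero]
    exact ((tendsto_norm_sq_add x).log (by positivity)).div_const 2

lemma tendsto_integral_fderiv_regLogNorm_mul (hE : 1 < Module.finrank ℝ E) (v : E)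
    (hψ : Continuous ψ) (hψc : HasCompactSupport ψ) :
    Tendsto (fun ε => ∫ x, fderiv ℝ (regLogNorm ε) x v * ψ x ∂μ) (𝓝[>] 0)
      (𝓝 (∫ x, ⟪x, v⟫ / ‖x‖ ^ 2 * ψ x ∂μ)) := by
  refine tendsto_integral_mul_of_dominated ((locallyIntegrable_inv_norm hE).smul ‖v‖)
    ?_ ?_ ?_ hψ hψc
  · filter_upwards [self_mem_nhdsWithin] with ε hε
    exact (((contDiff_regLogNorm hε).continuous_fderiv one_ne_zero).clm_apply
      continuous_const).aestronglyMeasurable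
  · filter_upwards [self_mem_nhdsWithin] with ε (hε : 0 < ε)
    refine .of_forall fun x => ?_
    rw [fderiv_regLogNorm hε]
    exact abs_inner_div_norm_sq_add_le hε.le x v
  · refine .of_forall fun x => ?_
    rcases eq_or_ne x 0 with rfl | hx
    · refine tendsto_const_nhds.congr' ?_
      filter_upwards [self_mem_nhdsWithin] with ε hε
      simp [fderiv_regLogNorm hε]
    refine (tendsto_const_nhds.div (tendsto_norm_sq_add x) (by positivity)).congr' ?_
    filter_upwards [self_mem_nhdsWithin] with ε hε
    exact (fderiv_regLogNorm hε x v).symm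

lemma integral_log_norm_mul_fderiv (hE : 1 < Module.finrank ℝ E) (hψ : ContDiff ℝ 1 ψ)
    (hψc : HasCompactSupport ψ) (v : E) :
    ∫ x, Real.log ‖x‖ * fderiv ℝ ψ x v ∂μ = -∫ x, ⟪x, v⟫ / ‖x‖ ^ 2 * ψ x ∂μ := by
  have hψ' : Continuous fun x => fderiv ℝ ψ x v :=
    (hψ.continuous_fderiv one_ne_zero).clm_apply continuous_const
  refine tendsto_nhds_unique_of_eventuallyEq
    (tendsto_integral_regLogNorm_mul hE hψ' (hψc.fderiv_apply ℝ v))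
    (tendsto_integral_fderiv_regLogNorm_mul hE v hψ.continuous hψc).neg ?_
  filter_upwards [self_mem_nhdsWithin] with ε hε
  exact integral_mul_fderiv_of_hasCompactSupport (contDiff_regLogNorm hε) hψ hψc v

lemma integral_inner_div_norm_sq_mul_fderiv_comm (hE : 1 < Module.finrank ℝ E)
    (hψ : ContDiff ℝ 1 ψ) (hψc : HasCompactSupport ψ) (v w : E) :
    ∫ x, ⟪x, v⟫ / ‖x‖ ^ 2 * fderiv ℝ ψ x w ∂μ = ∫ x, ⟪x, w⟫ / ‖x‖ ^ 2 * fderiv ℝ ψ x v ∂μ := by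
  have hψ' (v : E) : Continuous fun x => fderiv ℝ ψ x v :=
    (hψ.continuous_fderiv one_ne_zero).clm_apply continuous_const
  refine tendsto_nhds_unique_of_eventuallyEq
    (tendsto_integral_fderiv_regLogNorm_mul hE v (hψ' w) (hψc.fderiv_apply ℝ w))
    (tendsto_integral_fderiv_regLogNorm_mul hE w (hψ' v) (hψc.fderiv_apply ℝ v)) ?_
  filter_upwards [self_mem_nhdsWithin] with ε hε
  exact integral_fderiv_mul_fderiv_comm (contDiff_regLogNorm hε) hψ hψc v w

end RegularizedLog

section Plane

local notation "ℝ²" => EuclideanSpace ℝ (Fin 2)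

lemma contDiff_pd {f : ℝ² → ℝ} {n : WithTop ℕ∞} (hf : ContDiff ℝ (n + 1) f) (α : Fin 2) :
    ContDiff ℝ n (pd α f) :=
  (hf.fderiv_right le_rfl).clm_apply contDiff_const

lemma continuous_pd {f : ℝ² → ℝ} (hf : ContDiff ℝ 1 f) (α : Fin 2) : Continuous (pd α f) :=
  (hf.continuous_fderiv one_ne_zero).clm_apply continuous_const

lemma hasCompactSupport_pd {f : ℝ² → ℝ} (hf : HasCompactSupport f) (α : Fin 2) :
    HasCompactSupport (pd α f) :=
  hf.fderiv_apply ℝ _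

lemma pd_comm {f : ℝ² → ℝ} (hf : ContDiff ℝ 2 f) (α β : Fin 2) :
    pd α (pd β f) = pd β (pd α f) :=
  funext fun _ => fderiv_fderiv_apply_comm hf _ _ _

lemma pd_comp_add_right (α : Fin 2) (f : ℝ² → ℝ) (q : ℝ²) :
    pd α (fun x => f (x + q)) = fun x => pd α f (x + q) := by
  funext x
  simp only [pd, fderiv_comp_add_right]

lemma continuousLinearMap_apply_eq (L : ℝ² →L[ℝ] ℝ) (v : ℝ²) :
    L v = v 0 * L (EuclideanSpace.single 0 1) + v 1 * L (EuclideanSpace.single 1 1) := by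
  conv_lhs => rw [← (EuclideanSpace.basisFun (Fin 2) ℝ).sum_repr v]
  simp

lemma fderiv_apply_self_eq_pd (f : ℝ² → ℝ) (x : ℝ²) :
    fderiv ℝ f x x = x 0 * pd 0 f x + x 1 * pd 1 f x :=
  continuousLinearMap_apply_eq _ x

lemma hessian_apply_self_eq_pd {f : ℝ² → ℝ} (hf : ContDiff ℝ 2 f) (x : ℝ²) :
    fderiv ℝ (fderiv ℝ f) x x x = x 0 ^ 2 * pd 0 (pd 0 f) x + 2 * (x 0 * x 1) * pd 0 (pd 1 f) x
      + x 1 ^ 2 * pd 1 (pd 1 f) x := by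
  have h_apply (α : Fin 2) : fderiv ℝ (fderiv ℝ f) x x (EuclideanSpace.single α 1)
      = x 0 * pd 0 (pd α f) x + x 1 * pd 1 (pd α f) x := by
    rw [← fderiv_fderiv_apply_const hf, ← fderiv_apply_self_eq_pd]
    rfl
  rw [continuousLinearMap_apply_eq (fderiv ℝ (fderiv ℝ f) x x) x, h_apply, h_apply, pd_comm hf 1 0]
  ring

/-- The homogeneous kernel `x_α / r²`, the `α`-th partial derivative of the potential `log r`. -/
noncomputable def gradLogKernel (α : Fin 2) (x : ℝ²) : ℝ := x α / ‖x‖ ^ 2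

/-- The homogeneous kernel `x_α x_β / r²`, the anisotropic part of the strain of a wedge
disclination. -/
noncomputable def dyadKernel (α β : Fin 2) (x : ℝ²) : ℝ := x α * x β / ‖x‖ ^ 2

/-- The potential `log r`, the isotropic part of the strain of a wedge disclination. -/
noncomputable def logKernel (x : ℝ²) : ℝ := Real.log ‖x‖

lemma gradLogKernel_eq_inner (α : Fin 2) (x : ℝ²) :
    gradLogKernel α x = inner ℝ x (EuclideanSpace.single α 1) / ‖x‖ ^ 2 := by
  simp [gradLogKernel, EuclideanSpace.inner_single_right]

lemma one_lt_finrank_plane : 1 < Module.finrank ℝ ℝ² := by simp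

lemma locallyIntegrable_logKernel : LocallyIntegrable logKernel :=
  locallyIntegrable_log_norm one_lt_finrank_plane

lemma locallyIntegrable_gradLogKernel (α : Fin 2) : LocallyIntegrable (gradLogKernel α) := by
  simpa only [← gradLogKernel_eq_inner] using
    locallyIntegrable_inner_div_norm_sq one_lt_finrank_plane (EuclideanSpace.single α (1 : ℝ))

lemma abs_dyadKernel_le_one (α β : Fin 2) (x : ℝ²) : |dyadKernel α β x| ≤ 1 := by
  rw [dyadKernel, abs_div, abs_mul, abs_of_nonneg (sq_nonneg ‖x‖)]
  refine div_le_one_of_le₀ ?_ (sq_nonneg _)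
  rw [sq]
  exact mul_le_mul (PiLp.norm_apply_le x α) (PiLp.norm_apply_le x β) (abs_nonneg _) (norm_nonneg _)

lemma locallyIntegrable_dyadKernel (α β : Fin 2) : LocallyIntegrable (dyadKernel α β) := by
  have h_meas : Measurable (dyadKernel α β) := by unfold dyadKernel; fun_prop
  refine (locallyIntegrable_const (1 : ℝ)).mono h_meas.aestronglyMeasurable (.of_forall fun x => ?_)
  simpa using abs_dyadKernel_le_one α β x

/-- The pairing `⟨∂_x E_yz - ∂_y E_xz, φ⟩` of the distributional curl with a test function. -/
noncomputable def curlPairing (Exz Eyz φ : ℝ² → ℝ) : ℝ :=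
  ∫ x, (Exz x * pd 1 φ x - Eyz x * pd 0 φ x)

/-- The pairing `⟨∂_y² E_xx + ∂_x² E_yy - 2 ∂_x ∂_y E_xy, φ⟩` of the distributional planar
incompatibility with a test function. -/
noncomputable def incompatibilityPairing (Exx Exy Eyy φ : ℝ² → ℝ) : ℝ :=
  ∫ x, (Exx x * pd 1 (pd 1 φ) x + Eyy x * pd 0 (pd 0 φ) x - 2 * Exy x * pd 0 (pd 1 φ) x)

variable {f Exx Exy Eyy Exz Eyz φ : ℝ² → ℝ}

lemma integrable_mul_pd (hf : LocallyIntegrable f) (hφ : ContDiff ℝ 1 φ)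
    (hφc : HasCompactSupport φ) (α : Fin 2) : Integrable fun x => f x * pd α φ x :=
  hf.integrable_smul_right_of_hasCompactSupport (continuous_pd hφ α) (hasCompactSupport_pd hφc α)

lemma integrable_mul_pd_pd (hf : LocallyIntegrable f) (hφ : ContDiff ℝ 2 φ)
    (hφc : HasCompactSupport φ) (α β : Fin 2) : Integrable fun x => f x * pd α (pd β φ) x :=
  integrable_mul_pd hf (contDiff_pd hφ β) (hasCompactSupport_pd hφc β) α

lemma curlPairing_eq_sub (hxz : LocallyIntegrable Exz) (hyz : LocallyIntegrable Eyz)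
    (hφ : ContDiff ℝ 1 φ) (hφc : HasCompactSupport φ) :
    curlPairing Exz Eyz φ = (∫ x, Exz x * pd 1 φ x) - ∫ x, Eyz x * pd 0 φ x :=
  integral_sub (integrable_mul_pd hxz hφ hφc 1) (integrable_mul_pd hyz hφ hφc 0)

lemma curlPairing_smul (c : ℝ) (Exz Eyz φ : ℝ² → ℝ) :
    curlPairing (c • Exz) (c • Eyz) φ = c * curlPairing Exz Eyz φ := by
  rw [curlPairing, curlPairing, ← integral_const_mul]
  congr 1 with x
  simp only [Pi.smul_apply, smul_eq_mul]
  ring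

lemma incompatibilityPairing_eq_curlPairing_sub (hxx : LocallyIntegrable Exx)
    (hxy : LocallyIntegrable Exy) (hyy : LocallyIntegrable Eyy) (hφ : ContDiff ℝ 2 φ)
    (hφc : HasCompactSupport φ) :
    incompatibilityPairing Exx Exy Eyy φ
      = curlPairing Exx Exy (pd 1 φ) - curlPairing Exy Eyy (pd 0 φ) := by
  have hx : Integrable fun x => Exx x * pd 1 (pd 1 φ) x - Exy x * pd 0 (pd 1 φ) x :=
    (integrable_mul_pd_pd hxx hφ hφc 1 1).sub (integrable_mul_pd_pd hxy hφ hφc 0 1)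
  have hy : Integrable fun x => Exy x * pd 1 (pd 0 φ) x - Eyy x * pd 0 (pd 0 φ) x :=
    (integrable_mul_pd_pd hxy hφ hφc 1 0).sub (integrable_mul_pd_pd hyy hφ hφc 0 0)
  rw [curlPairing, curlPairing, ← integral_sub hx hy, incompatibilityPairing, pd_comm hφ 1 0]
  congr 1 with x
  ring

lemma incompatibilityPairing_smul (c : ℝ) (Exx Exy Eyy φ : ℝ² → ℝ) :
    incompatibilityPairing (c • Exx) (c • Exy) (c • Eyy) φ
      = c * incompatibilityPairing Exx Exy Eyy φ := by
  rw [incompatibilityPairing, incompatibilityPairing, ← integral_const_mul]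
  congr 1 with x
  simp only [Pi.smul_apply, smul_eq_mul]
  ring

lemma incompatibilityPairing_add {Exx' Exy' Eyy' : ℝ² → ℝ} (hxx : LocallyIntegrable Exx)
    (hxy : LocallyIntegrable Exy) (hyy : LocallyIntegrable Eyy) (hxx' : LocallyIntegrable Exx')
    (hxy' : LocallyIntegrable Exy') (hyy' : LocallyIntegrable Eyy') (hφ : ContDiff ℝ 2 φ)
    (hφc : HasCompactSupport φ) :
    incompatibilityPairing (Exx + Exx') (Exy + Exy') (Eyy + Eyy') φ
      = incompatibilityPairing Exx Exy Eyy φ + incompatibilityPairing Exx' Exy' Eyy' φ := by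
  have h_int {Exx Exy Eyy : ℝ² → ℝ} (hxx : LocallyIntegrable Exx)
      (hxy : LocallyIntegrable Exy) (hyy : LocallyIntegrable Eyy) : Integrable fun x =>
        Exx x * pd 1 (pd 1 φ) x + Eyy x * pd 0 (pd 0 φ) x - 2 * Exy x * pd 0 (pd 1 φ) x := by
    simp only [mul_assoc]
    exact ((integrable_mul_pd_pd hxx hφ hφc 1 1).add (integrable_mul_pd_pd hyy hφ hφc 0 0)).sub
      ((integrable_mul_pd_pd hxy hφ hφc 0 1).const_mul 2)
  simp only [incompatibilityPairing]
  rw [← integral_add (h_int hxx hxy hyy) (h_int hxx' hxy' hyy')]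
  congr 1 with x
  simp only [Pi.add_apply]
  ring

section Defects

lemma finrank_mul_measureReal_ball :
    Module.finrank ℝ ℝ² * volume.real (ball (0 : ℝ²) 1) = 2 * π := by
  simp [Measure.real, pi_nonneg]

lemma curlPairing_gradLogKernel (hφ : ContDiff ℝ 1 φ) (hφc : HasCompactSupport φ) :
    curlPairing (gradLogKernel 0) (gradLogKernel 1) φ = 0 := by
  rw [curlPairing_eq_sub (locallyIntegrable_gradLogKernel 0) (locallyIntegrable_gradLogKernel 1)
    hφ hφc, sub_eq_zero]
  simp only [gradLogKernel_eq_inner]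
  exact integral_inner_div_norm_sq_mul_fderiv_comm one_lt_finrank_plane hφ hφc _ _

lemma curlPairing_gradLogKernel_rotated (hφ : ContDiff ℝ 1 φ) (hφc : HasCompactSupport φ) :
    curlPairing (-gradLogKernel 1) (gradLogKernel 0) φ = 2 * π * φ 0 := by
  rw [← finrank_mul_measureReal_ball, ← neg_eq_iff_eq_neg.2
    (integral_fderiv_apply_self_div_norm_pow volume hφ hφc), ← integral_neg, curlPairing]
  congr 1 with x
  rw [fderiv_apply_self_eq_pd, finrank_euclideanSpace_fin]
  simp only [gradLogKernel, Pi.neg_apply]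
  ring

lemma integral_logKernel_mul_laplacian (hφ : ContDiff ℝ 2 φ) (hφc : HasCompactSupport φ) :
    ∫ x, logKernel x * (pd 0 (pd 0 φ) x + pd 1 (pd 1 φ) x) = 2 * π * φ 0 := by
  have hφ₁ : ContDiff ℝ 1 φ := hφ.of_le one_le_two
  have h_int (α : Fin 2) := integrable_mul_pd_pd locallyIntegrable_logKernel hφ hφc α α
  have h_parts (α : Fin 2) :
      ∫ x, logKernel x * pd α (pd α φ) x = -∫ x, gradLogKernel α x * pd α φ x := by
    simp only [gradLogKernel_eq_inner]
    exact integral_log_norm_mul_fderiv one_lt_finrank_plane (contDiff_pd hφ α)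
      (hasCompactSupport_pd hφc α) _
  calc ∫ x, logKernel x * (pd 0 (pd 0 φ) x + pd 1 (pd 1 φ) x)
      = (∫ x, logKernel x * pd 0 (pd 0 φ) x) + ∫ x, logKernel x * pd 1 (pd 1 φ) x := by
        simp only [mul_add, integral_add (h_int 0) (h_int 1)]
    _ = curlPairing (-gradLogKernel 1) (gradLogKernel 0) φ := by
        rw [curlPairing_eq_sub (locallyIntegrable_gradLogKernel 1).neg
          (locallyIntegrable_gradLogKernel 0) hφ₁ hφc, h_parts, h_parts]
        simp only [Pi.neg_apply, neg_mul, integral_neg]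
        ring
    _ = 2 * π * φ 0 := curlPairing_gradLogKernel_rotated hφ₁ hφc

lemma incompatibilityPairing_edge_x (hφ : ContDiff ℝ 2 φ) (hφc : HasCompactSupport φ) :
    incompatibilityPairing (-gradLogKernel 1) (gradLogKernel 0) (gradLogKernel 1) φ
      = 2 * π * pd 1 φ 0 := by
  rw [incompatibilityPairing_eq_curlPairing_sub (locallyIntegrable_gradLogKernel 1).neg
    (locallyIntegrable_gradLogKernel 0) (locallyIntegrable_gradLogKernel 1) hφ hφc,
    curlPairing_gradLogKernel_rotated (contDiff_pd hφ 1) (hasCompactSupport_pd hφc 1),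
    curlPairing_gradLogKernel (contDiff_pd hφ 0) (hasCompactSupport_pd hφc 0), sub_zero]

lemma incompatibilityPairing_edge_y (hφ : ContDiff ℝ 2 φ) (hφc : HasCompactSupport φ) :
    incompatibilityPairing (-gradLogKernel 0) (-gradLogKernel 1) (gradLogKernel 0) φ
      = -(2 * π * pd 0 φ 0) := by
  have h_neg : curlPairing (-gradLogKernel 0) (-gradLogKernel 1) (pd 1 φ) = 0 := by
    rw [← neg_one_smul ℝ (gradLogKernel 0), ← neg_one_smul ℝ (gradLogKernel 1), curlPairing_smul,
      curlPairing_gradLogKernel (contDiff_pd hφ 1) (hasCompactSupport_pd hφc 1), mul_zero]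
  rw [incompatibilityPairing_eq_curlPairing_sub (locallyIntegrable_gradLogKernel 0).neg
    (locallyIntegrable_gradLogKernel 1).neg (locallyIntegrable_gradLogKernel 0) hφ hφc, h_neg,
    curlPairing_gradLogKernel_rotated (contDiff_pd hφ 0) (hasCompactSupport_pd hφc 0), zero_sub]

lemma incompatibilityPairing_wedge (hφ : ContDiff ℝ 2 φ) (hφc : HasCompactSupport φ) :
    incompatibilityPairing (logKernel + dyadKernel 1 1) (-dyadKernel 0 1)
      (logKernel + dyadKernel 0 0) φ = 4 * π * φ 0 := by
  have h_log (α : Fin 2) := integrable_mul_pd_pd locallyIntegrable_logKernel hφ hφc α α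
  have h_lap : Integrable fun x => logKernel x * (pd 0 (pd 0 φ) x + pd 1 (pd 1 φ) x) := by
    simp only [mul_add]
    exact (h_log 0).add (h_log 1)
  have h_hess := integrable_hessian_apply_self_div_norm_pow volume hφ hφc
  calc incompatibilityPairing (logKernel + dyadKernel 1 1) (-dyadKernel 0 1)
        (logKernel + dyadKernel 0 0) φ
      = ∫ x, (logKernel x * (pd 0 (pd 0 φ) x + pd 1 (pd 1 φ) x)
          + fderiv ℝ (fderiv ℝ φ) x x x / ‖x‖ ^ Module.finrank ℝ ℝ²) := by
        rw [incompatibilityPairing]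
        congr 1 with x
        rw [hessian_apply_self_eq_pd hφ, finrank_euclideanSpace_fin]
        simp only [dyadKernel, Pi.add_apply, Pi.neg_apply]
        ring
    _ = 2 * π * φ 0 + 2 * π * φ 0 := by
        rw [integral_add h_lap h_hess, integral_logKernel_mul_laplacian hφ hφc,
          integral_hessian_apply_self_div_norm_pow volume hφ hφc, finrank_mul_measureReal_ball]
    _ = 4 * π * φ 0 := by ring

lemma sub_sq_add_sub_sq (q x : ℝ²) : (x 0 - q 0) ^ 2 + (x 1 - q 1) ^ 2 = ‖x - q‖ ^ 2 := by
  simp [EuclideanSpace.real_norm_sq_eq]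

lemma tExz_eq (b₃ : ℝ) (q x : ℝ²) :
    tExz b₃ q x = ((b₃ / (2 * π)) • -gradLogKernel 1) (x - q) := by
  simp only [tExz, sub_sq_add_sub_sq, gradLogKernel, Pi.smul_apply, Pi.neg_apply, PiLp.sub_apply,
    smul_eq_mul]
  ring

lemma tEyz_eq (b₃ : ℝ) (q x : ℝ²) :
    tEyz b₃ q x = ((b₃ / (2 * π)) • gradLogKernel 0) (x - q) := by
  simp only [tEyz, sub_sq_add_sub_sq, gradLogKernel, Pi.smul_apply, PiLp.sub_apply, smul_eq_mul]
  ring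

lemma tExx_eq (Ω b₁ b₂ : ℝ) (q x : ℝ²) :
    tExx Ω b₁ b₂ q x = ((b₁ / (2 * π)) • -gradLogKernel 1 + (b₂ / (2 * π)) • -gradLogKernel 0
      + (Ω / (4 * π)) • (logKernel + dyadKernel 1 1)) (x - q) := by
  simp only [tExx, sub_sq_add_sub_sq, gradLogKernel, dyadKernel, logKernel, Pi.add_apply,
    Pi.smul_apply, Pi.neg_apply, PiLp.sub_apply, smul_eq_mul, Real.sqrt_sq (norm_nonneg _)]
  ring

lemma tExy_eq (Ω b₁ b₂ : ℝ) (q x : ℝ²) :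
    tExy Ω b₁ b₂ q x = ((b₁ / (2 * π)) • gradLogKernel 0 + (b₂ / (2 * π)) • -gradLogKernel 1
      + (Ω / (4 * π)) • -dyadKernel 0 1) (x - q) := by
  simp only [tExy, sub_sq_add_sub_sq, gradLogKernel, dyadKernel, Pi.add_apply, Pi.smul_apply,
    Pi.neg_apply, PiLp.sub_apply, smul_eq_mul]
  ring

lemma tEyy_eq (Ω b₁ b₂ : ℝ) (q x : ℝ²) :
    tEyy Ω b₁ b₂ q x = ((b₁ / (2 * π)) • gradLogKernel 1 + (b₂ / (2 * π)) • gradLogKernel 0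
      + (Ω / (4 * π)) • (logKernel + dyadKernel 0 0)) (x - q) := by
  simp only [tEyy, sub_sq_add_sub_sq, gradLogKernel, dyadKernel, logKernel, Pi.add_apply,
    Pi.smul_apply, PiLp.sub_apply, smul_eq_mul, Real.sqrt_sq (norm_nonneg _)]
  ring

lemma curlPairing_comp_sub_right (Exz Eyz φ : ℝ² → ℝ) (q : ℝ²) :
    curlPairing (fun x => Exz (x - q)) (fun x => Eyz (x - q)) φ
      = curlPairing Exz Eyz fun x => φ (x + q) := by
  simp only [curlPairing, pd_comp_add_right]
  rw [← integral_add_right_eq_self _ q]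
  simp only [add_sub_cancel_right]

lemma incompatibilityPairing_comp_sub_right (Exx Exy Eyy φ : ℝ² → ℝ) (q : ℝ²) :
    incompatibilityPairing (fun x => Exx (x - q)) (fun x => Exy (x - q)) (fun x => Eyy (x - q)) φ
      = incompatibilityPairing Exx Exy Eyy fun x => φ (x + q) := by
  simp only [incompatibilityPairing, pd_comp_add_right]
  rw [← integral_add_right_eq_self _ q]
  simp only [add_sub_cancel_right]

lemma curlPairing_screw (hφ : ContDiff ℝ 1 φ) (hφc : HasCompactSupport φ) (b₃ : ℝ) (q : ℝ²) :
    curlPairing (tExz b₃ q) (tEyz b₃ q) φ = b₃ * φ q := by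
  have hψ : ContDiff ℝ 1 fun x => φ (x + q) := hφ.comp (contDiff_id.add contDiff_const)
  have hψc : HasCompactSupport fun x => φ (x + q) :=
    hφc.comp_homeomorph (Homeomorph.addRight q)
  rw [funext (tExz_eq b₃ q), funext (tEyz_eq b₃ q), curlPairing_comp_sub_right, curlPairing_smul,
    curlPairing_gradLogKernel_rotated hψ hψc, zero_add]
  field_simp

lemma incompatibilityPairing_edge_wedge (hφ : ContDiff ℝ 2 φ) (hφc : HasCompactSupport φ)
    (Ω b₁ b₂ : ℝ) (q : ℝ²) :
    incompatibilityPairing (tExx Ω b₁ b₂ q) (tExy Ω b₁ b₂ q) (tEyy Ω b₁ b₂ q) φ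
      = Ω * φ q + b₂ * -pd 0 φ q - b₁ * -pd 1 φ q := by
  have hψ : ContDiff ℝ 2 fun x => φ (x + q) := hφ.comp (contDiff_id.add contDiff_const)
  have hψc : HasCompactSupport fun x => φ (x + q) :=
    hφc.comp_homeomorph (Homeomorph.addRight q)
  have h_grad := locallyIntegrable_gradLogKernel
  have h_dyad := locallyIntegrable_dyadKernel
  have h_log := locallyIntegrable_logKernel
  rw [funext (tExx_eq Ω b₁ b₂ q), funext (tExy_eq Ω b₁ b₂ q), funext (tEyy_eq Ω b₁ b₂ q),
    incompatibilityPairing_comp_sub_right,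
    incompatibilityPairing_add (((h_grad 1).neg.smul _).add ((h_grad 0).neg.smul _))
      (((h_grad 0).smul _).add ((h_grad 1).neg.smul _))
      (((h_grad 1).smul _).add ((h_grad 0).smul _)) ((h_log.add (h_dyad 1 1)).smul _)
      ((h_dyad 0 1).neg.smul _) ((h_log.add (h_dyad 0 0)).smul _) hψ hψc,
    incompatibilityPairing_add ((h_grad 1).neg.smul _) ((h_grad 0).smul _) ((h_grad 1).smul _)
      ((h_grad 0).neg.smul _) ((h_grad 1).neg.smul _) ((h_grad 0).smul _) hψ hψc,
    incompatibilityPairing_smul, incompatibilityPairing_smul, incompatibilityPairing_smul,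
    incompatibilityPairing_edge_x hψ hψc, incompatibilityPairing_edge_y hψ hψc,
    incompatibilityPairing_wedge hψ hψc]
  simp only [pd_comp_add_right, zero_add]
  field_simp
  ring

end Defects

section Superposition

variable {ι : Type*}

lemma hasSum_curlPairing [Countable ι] {t u : ι → ℝ² → ℝ} (ht : LocallyL1Summable t volume)
    (hu : LocallyL1Summable u volume) (hφ : ContDiff ℝ 1 φ) (hφc : HasCompactSupport φ) :
    HasSum (fun i => curlPairing (t i) (u i) φ)
      (curlPairing (fun x => ∑' i, t i x) (fun x => ∑' i, u i x) φ) := by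
  simp only [curlPairing_eq_sub (ht.locallyIntegrable _) (hu.locallyIntegrable _) hφ hφc,
    curlPairing_eq_sub ht.locallyIntegrable_tsum hu.locallyIntegrable_tsum hφ hφc]
  exact (ht.hasSum_integral_mul (continuous_pd hφ 1) (hasCompactSupport_pd hφc 1)).sub
    (hu.hasSum_integral_mul (continuous_pd hφ 0) (hasCompactSupport_pd hφc 0))

lemma hasSum_incompatibilityPairing [Countable ι] {t u v : ι → ℝ² → ℝ}
    (ht : LocallyL1Summable t volume) (hu : LocallyL1Summable u volume)
    (hv : LocallyL1Summable v volume) (hφ : ContDiff ℝ 2 φ) (hφc : HasCompactSupport φ) :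
    HasSum (fun i => incompatibilityPairing (t i) (u i) (v i) φ)
      (incompatibilityPairing (fun x => ∑' i, t i x) (fun x => ∑' i, u i x)
        (fun x => ∑' i, v i x) φ) := by
  simp only [incompatibilityPairing_eq_curlPairing_sub (ht.locallyIntegrable _)
      (hu.locallyIntegrable _) (hv.locallyIntegrable _) hφ hφc,
    incompatibilityPairing_eq_curlPairing_sub ht.locallyIntegrable_tsum hu.locallyIntegrable_tsum
      hv.locallyIntegrable_tsum hφ hφc]
  exact (hasSum_curlPairing ht hu (contDiff_pd hφ 1) (hasCompactSupport_pd hφc 1)).sub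
    (hasSum_curlPairing hu hv (contDiff_pd hφ 0) (hasCompactSupport_pd hφc 0))

variable {p : ι → ℝ²} {Ω b₁ b₂ b₃ : ι → ℝ}

lemma locallyL1Summable_smul_kernel {k : ℝ² → ℝ} (hk : LocallyIntegrable k)
    (hp : Bornology.IsBounded (range p)) {c : ι → ℝ} (hc : Summable c) (a : ℝ) :
    LocallyL1Summable (fun i x => (c i / a) • k (x - p i)) volume :=
  locallyL1Summable_smul_comp_sub_right hk hp.isCompact_closure
    (fun i => subset_closure (mem_range_self i)) (hc.div_const a)

lemma locallyL1Summable_tExz (hp : Bornology.IsBounded (range p)) (h₃ : Summable b₃) :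
    LocallyL1Summable (fun i => tExz (b₃ i) (p i)) volume := by
  simp only [funext (tExz_eq _ _)]
  exact locallyL1Summable_smul_kernel (locallyIntegrable_gradLogKernel 1).neg hp h₃ _

lemma locallyL1Summable_tEyz (hp : Bornology.IsBounded (range p)) (h₃ : Summable b₃) :
    LocallyL1Summable (fun i => tEyz (b₃ i) (p i)) volume := by
  simp only [funext (tEyz_eq _ _)]
  exact locallyL1Summable_smul_kernel (locallyIntegrable_gradLogKernel 0) hp h₃ _

lemma locallyL1Summable_tExx (hp : Bornology.IsBounded (range p)) (hΩ : Summable Ω)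
    (h₁ : Summable b₁) (h₂ : Summable b₂) :
    LocallyL1Summable (fun i => tExx (Ω i) (b₁ i) (b₂ i) (p i)) volume := by
  simp only [funext (tExx_eq _ _ _ _)]
  exact ((locallyL1Summable_smul_kernel (locallyIntegrable_gradLogKernel 1).neg hp h₁ _).add
    (locallyL1Summable_smul_kernel (locallyIntegrable_gradLogKernel 0).neg hp h₂ _)).add
    (locallyL1Summable_smul_kernel
      (locallyIntegrable_logKernel.add (locallyIntegrable_dyadKernel 1 1)) hp hΩ _)

lemma locallyL1Summable_tExy (hp : Bornology.IsBounded (range p)) (hΩ : Summable Ω)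
    (h₁ : Summable b₁) (h₂ : Summable b₂) :
    LocallyL1Summable (fun i => tExy (Ω i) (b₁ i) (b₂ i) (p i)) volume := by
  simp only [funext (tExy_eq _ _ _ _)]
  exact ((locallyL1Summable_smul_kernel (locallyIntegrable_gradLogKernel 0) hp h₁ _).add
    (locallyL1Summable_smul_kernel (locallyIntegrable_gradLogKernel 1).neg hp h₂ _)).add
    (locallyL1Summable_smul_kernel (locallyIntegrable_dyadKernel 0 1).neg hp hΩ _)

lemma locallyL1Summable_tEyy (hp : Bornology.IsBounded (range p)) (hΩ : Summable Ω)
    (h₁ : Summable b₁) (h₂ : Summable b₂) :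
    LocallyL1Summable (fun i => tEyy (Ω i) (b₁ i) (b₂ i) (p i)) volume := by
  simp only [funext (tEyy_eq _ _ _ _)]
  exact ((locallyL1Summable_smul_kernel (locallyIntegrable_gradLogKernel 1) hp h₁ _).add
    (locallyL1Summable_smul_kernel (locallyIntegrable_gradLogKernel 0) hp h₂ _)).add
    (locallyL1Summable_smul_kernel
      (locallyIntegrable_logKernel.add (locallyIntegrable_dyadKernel 0 0)) hp hΩ _)

end Superposition

end Plane

theorem main_incompatibility_decomposition_general {ι : Type*} [Countable ι]
    (p : ι → EuclideanSpace ℝ (Fin 2)) (hp : Bornology.IsBounded (Set.range p)) (Ω : ι → ℝ)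
    (b : ι → Fin 3 → ℝ) (hsum : Summable fun i => |Ω i| + |b i 0| + |b i 1| + |b i 2|) :
    (∀ᵐ x : EuclideanSpace ℝ (Fin 2),
      (Summable fun i => |tExz (b i 2) (p i) x|) ∧
      (Summable fun i => |tEyz (b i 2) (p i) x|) ∧
      (Summable fun i => |tExx (Ω i) (b i 0) (b i 1) (p i) x|) ∧
      (Summable fun i => |tExy (Ω i) (b i 0) (b i 1) (p i) x|) ∧
      (Summable fun i => |tEyy (Ω i) (b i 0) (b i 1) (p i) x|)) ∧
    (∀ A : Set (EuclideanSpace ℝ (Fin 2)), Bornology.IsBounded A →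
      IntegrableOn (fun x => ∑' i, tExz (b i 2) (p i) x) A volume ∧
      IntegrableOn (fun x => ∑' i, tEyz (b i 2) (p i) x) A volume ∧
      IntegrableOn (fun x => ∑' i, tExx (Ω i) (b i 0) (b i 1) (p i) x) A volume ∧
      IntegrableOn (fun x => ∑' i, tExy (Ω i) (b i 0) (b i 1) (p i) x) A volume ∧
      IntegrableOn (fun x => ∑' i, tEyy (Ω i) (b i 0) (b i 1) (p i) x) A volume) ∧
    (∀ φ : EuclideanSpace ℝ (Fin 2) → ℝ, ContDiff ℝ 2 φ → HasCompactSupport φ →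
      HasSum (fun i => Ω i * φ (p i) + b i 1 * (-(pd 0 φ (p i))) - b i 0 * (-(pd 1 φ (p i))))
        (incompatibilityPairing (fun x => ∑' i, tExx (Ω i) (b i 0) (b i 1) (p i) x)
          (fun x => ∑' i, tExy (Ω i) (b i 0) (b i 1) (p i) x)
          (fun x => ∑' i, tEyy (Ω i) (b i 0) (b i 1) (p i) x) φ)) ∧
    (∀ φ : EuclideanSpace ℝ (Fin 2) → ℝ, ContDiff ℝ 1 φ → HasCompactSupport φ →
      HasSum (fun i => b i 2 * φ (p i))
        (curlPairing (fun x => ∑' i, tExz (b i 2) (p i) x)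
          (fun x => ∑' i, tEyz (b i 2) (p i) x) φ)) := by
  have hΩ : Summable Ω := .of_norm_bounded hsum fun i => by
    rw [Real.norm_eq_abs, add_assoc, add_assoc]
    exact le_add_of_nonneg_right (by positivity)
  have hb (j : Fin 3) : Summable fun i => b i j := .of_norm_bounded hsum fun i => by
    have hj : |b i j| ≤ ∑ j, |b i j| :=
      Finset.single_le_sum (fun j _ => abs_nonneg (b i j)) (Finset.mem_univ j)
    rw [Fin.sum_univ_three] at hj
    rw [Real.norm_eq_abs]
    linarith [abs_nonneg (Ω i)]
  have hxz := locallyL1Summable_tExz hp (hb 2)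
  have hyz := locallyL1Summable_tEyz hp (hb 2)
  have hxx := locallyL1Summable_tExx hp hΩ (hb 0) (hb 1)
  have hxy := locallyL1Summable_tExy hp hΩ (hb 0) (hb 1)
  have hyy := locallyL1Summable_tEyy hp hΩ (hb 0) (hb 1)
  refine ⟨?_, fun A hA => ⟨hxz.integrableOn_tsum_of_isBounded hA,
    hyz.integrableOn_tsum_of_isBounded hA, hxx.integrableOn_tsum_of_isBounded hA,
    hxy.integrableOn_tsum_of_isBounded hA, hyy.integrableOn_tsum_of_isBounded hA⟩,
    fun φ hφ hφc => ?_, fun φ hφ hφc => ?_⟩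
  · filter_upwards [hxz.ae_summable_norm, hyz.ae_summable_norm, hxx.ae_summable_norm,
      hxy.ae_summable_norm, hyy.ae_summable_norm] with x h₁ h₂ h₃ h₄ h₅
    exact ⟨h₁, h₂, h₃, h₄, h₅⟩
  · simpa only [incompatibilityPairing_edge_wedge hφ hφc]
      using hasSum_incompatibilityPairing hxx hxy hyy hφ hφc
  · simpa only [curlPairing_screw hφ hφc] using hasSum_curlPairing hxz hyz hφ hφc

/-- **Main theorem of the paper (explicit form): incompatibility decomposition for a
countable set of 2D defect lines.** The superposed screw/edge/wedge strains converge
absolutely a.e., are integrable on bounded measurable sets, and their distributional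
planar incompatibility and curl are the concentrated first-order distributions
`∑_i (Ω_i δ + b₂ ∂_xδ − b₁ ∂_yδ)` and `∑_i b₃ δ` on the defect set. -/
theorem main_incompatibility_decomposition (p : ℕ → EuclideanSpace ℝ (Fin 2))
    (hp : Bornology.IsBounded (Set.range p)) (Ω : ℕ → ℝ) (b : ℕ → Fin 3 → ℝ)
    (hsum : Summable fun i => |Ω i| + |b i 0| + |b i 1| + |b i 2|) :
    (∀ᵐ x : EuclideanSpace ℝ (Fin 2),
      (Summable fun i => |tExz (b i 2) (p i) x|) ∧
      (Summable fun i => |tEyz (b i 2) (p i) x|) ∧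
      (Summable fun i => |tExx (Ω i) (b i 0) (b i 1) (p i) x|) ∧
      (Summable fun i => |tExy (Ω i) (b i 0) (b i 1) (p i) x|) ∧
      (Summable fun i => |tEyy (Ω i) (b i 0) (b i 1) (p i) x|)) ∧
    (∀ A : Set (EuclideanSpace ℝ (Fin 2)), MeasurableSet A → Bornology.IsBounded A →
      IntegrableOn (fun x => ∑' i, tExz (b i 2) (p i) x) A volume ∧
      IntegrableOn (fun x => ∑' i, tEyz (b i 2) (p i) x) A volume ∧
      IntegrableOn (fun x => ∑' i, tExx (Ω i) (b i 0) (b i 1) (p i) x) A volume ∧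
      IntegrableOn (fun x => ∑' i, tExy (Ω i) (b i 0) (b i 1) (p i) x) A volume ∧
      IntegrableOn (fun x => ∑' i, tEyy (Ω i) (b i 0) (b i 1) (p i) x) A volume) ∧
    (∀ φ : EuclideanSpace ℝ (Fin 2) → ℝ, ContDiff ℝ (⊤ : ℕ∞) φ → HasCompactSupport φ →
      (Summable fun i => Ω i * φ (p i)
        + b i 1 * (-(pd 0 φ (p i))) - b i 0 * (-(pd 1 φ (p i)))) ∧
      (∫ x : EuclideanSpace ℝ (Fin 2),
          ((∑' i, tExx (Ω i) (b i 0) (b i 1) (p i) x) * pd 1 (pd 1 φ) x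
            + (∑' i, tEyy (Ω i) (b i 0) (b i 1) (p i) x) * pd 0 (pd 0 φ) x
            - 2 * (∑' i, tExy (Ω i) (b i 0) (b i 1) (p i) x) * pd 0 (pd 1 φ) x)
        = ∑' i, (Ω i * φ (p i)
            + b i 1 * (-(pd 0 φ (p i))) - b i 0 * (-(pd 1 φ (p i))))) ∧
      (Summable fun i => b i 2 * φ (p i)) ∧
      (∫ x : EuclideanSpace ℝ (Fin 2),
          ((∑' i, tExz (b i 2) (p i) x) * pd 1 φ x
            - (∑' i, tEyz (b i 2) (p i) x) * pd 0 φ x)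
        = ∑' i, b i 2 * φ (p i))) := by
  obtain ⟨h_ae, h_int, h_inc, h_curl⟩ := main_incompatibility_decomposition_general p hp Ω b hsum
  refine ⟨h_ae, fun A _ => h_int A, fun φ hφ hφc => ?_⟩
  have h₁ := h_inc φ (contDiff_infty.1 hφ 2) hφc
  have h₂ := h_curl φ (mod_cast contDiff_infty.1 hφ 1) hφc
  exact ⟨h₁.summable, h₁.tsum_eq.symm, h₂.summable, h₂.tsum_eq.symm⟩
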